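/- Let u, v ∈ F₂ with ‖u‖ ≥ ‖v‖, let ψ be a chain of type (C1) that contains at least ‖u‖+2 factors of σ and that ends in τ (i.e., ψ = τψ₂ for some chain ψ₂ of type (C1)), and put k = ‖u‖+1. Suppose that for every chain ψ' of type (C1) with |ψ'| ≤ |ψ| one has: ‖σ^{k+1}ψ'(u)‖ = ‖σ^{k}ψ'(u)‖ if and only if ‖σ^{k+1}ψ'(v)‖ = ‖σ^{k}ψ'(v)‖, and ‖τ^{k+1}ψ'(u)‖ = ‖τ^{k}ψ'(u)‖ if and only if ‖τ^{k+1}ψ'(v)‖ = ‖τ^{k}ψ'(v)‖. Then ‖τψ(u)‖ = ‖ψ(u)‖ if and only if ‖τψ(v)‖ = ‖ψ(v)‖. -/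

import Mathlib

noncomputable section

/-- The free group of rank two. -/
abbrev F : Type := FreeGroup (Fin 2)

/-- The generator `a`. -/
def ga : F := FreeGroup.of 0

/-- The generator `b`. -/
def gb : F := FreeGroup.of 1

/-- Build an automorphism of `F` from images of the generators together with
an explicit inverse. -/
def mkAut (x y xi yi : F)
    (h1 : FreeGroup.lift ![xi, yi] x = ga)
    (h2 : FreeGroup.lift ![xi, yi] y = gb)
    (h3 : FreeGroup.lift ![x, y] xi = ga)
    (h4 : FreeGroup.lift ![x, y] yi = gb) : MulAut F :=
  MonoidHom.toMulEquiv (FreeGroup.lift ![x, y]) (FreeGroup.lift ![xi, yi])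
    (by
      ext i
      fin_cases i
      · simpa [ga] using h1
      · simpa [gb] using h2)
    (by
      ext i
      fin_cases i
      · simpa [ga] using h3
      · simpa [gb] using h4)

/-- `σ : a ↦ ab, b ↦ b`. -/
def σ : MulAut F :=
  mkAut (ga * gb) gb (ga * gb⁻¹) gb
    (by simp [ga, gb]) (by simp [ga, gb]) (by simp [ga, gb]) (by simp [ga, gb])

/-- `τ : a ↦ a, b ↦ ba`. -/
def τ : MulAut F :=
  mkAut ga (gb * ga) ga (gb * ga⁻¹)
    (by simp [ga, gb]) (by simp [ga, gb]) (by simp [ga, gb]) (by simp [ga, gb])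

/-- `δ₁ : a ↦ b⁻¹ab, b ↦ b`. -/
def δ₁ : MulAut F :=
  mkAut (gb⁻¹ * ga * gb) gb (gb * ga * gb⁻¹) gb
    (by simp [ga, gb, mul_assoc]) (by simp [ga, gb]) (by simp [ga, gb, mul_assoc]) (by simp [ga, gb])

/-- `δ₂ : a ↦ bab⁻¹, b ↦ b`. -/
def δ₂ : MulAut F :=
  mkAut (gb * ga * gb⁻¹) gb (gb⁻¹ * ga * gb) gb
    (by simp [ga, gb, mul_assoc]) (by simp [ga, gb]) (by simp [ga, gb, mul_assoc]) (by simp [ga, gb])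

/-- `δ₃ : a ↦ a, b ↦ a⁻¹ba`. -/
def δ₃ : MulAut F :=
  mkAut ga (ga⁻¹ * gb * ga) ga (ga * gb * ga⁻¹)
    (by simp [ga, gb]) (by simp [ga, gb, mul_assoc]) (by simp [ga, gb]) (by simp [ga, gb, mul_assoc])

/-- `δ₄ : a ↦ a, b ↦ aba⁻¹`. -/
def δ₄ : MulAut F :=
  mkAut ga (ga * gb * ga⁻¹) ga (ga⁻¹ * gb * ga)
    (by simp [ga, gb]) (by simp [ga, gb, mul_assoc]) (by simp [ga, gb]) (by simp [ga, gb, mul_assoc])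

/-- `π : a ↦ b, b ↦ a⁻¹`. -/
def pi' : MulAut F :=
  mkAut gb ga⁻¹ gb⁻¹ ga
    (by simp [ga, gb]) (by simp [ga, gb]) (by simp [ga, gb]) (by simp [ga, gb])

/-- Word length of (the reduced word representing) an element of `F`. -/
def len (w : F) : ℕ := w.toWord.length

/-- Cyclic length: minimal word length among all conjugates. -/
def cyclen (w : F) : ℕ := sInf {n | ∃ g : F, len (g * w * g⁻¹) = n}

/-- The chain `τ^{m_k}σ^{l_k}⋯τ^{m_1}σ^{l_1}` of type (C1) determined by the list
`[(l_k, m_k), …, (l_1, m_1)]` of pairs of exponents. -/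
def chainC1 (c : List (ℕ × ℕ)) : MulAut F :=
  (c.map fun p => τ ^ p.2 * σ ^ p.1).prod

/-- The chain `τ^{-m_k}σ^{-l_k}⋯τ^{-m_1}σ^{-l_1}` of type (C2) determined by the list
`[(l_k, m_k), …, (l_1, m_1)]` of pairs of exponents. -/
def chainC2 (c : List (ℕ × ℕ)) : MulAut F :=
  (c.map fun p => (τ ^ p.2)⁻¹ * (σ ^ p.1)⁻¹).prod

/-- Number of factors of `σ` in a chain. -/
def sigmaCount (c : List (ℕ × ℕ)) : ℕ := (c.map Prod.fst).sum

/-- Number of factors of `τ` in a chain. -/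
def tauCount (c : List (ℕ × ℕ)) : ℕ := (c.map Prod.snd).sum

/-- The length `Σ (l_i + m_i)` of a chain. -/
def chainLen (c : List (ℕ × ℕ)) : ℕ := sigmaCount c + tauCount c

/-- A Whitehead automorphism of type (W1): it permutes `{a, a⁻¹, b, b⁻¹}`. -/
def IsW1 (β : MulAut F) : Prop :=
  β ga ∈ ({ga, ga⁻¹, gb, gb⁻¹} : Set F) ∧ β gb ∈ ({ga, ga⁻¹, gb, gb⁻¹} : Set F)

/-- A chain of type (C1). -/
def IsC1 (φ : MulAut F) : Prop := ∃ c : List (ℕ × ℕ), c ≠ [] ∧ φ = chainC1 c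

/-- A chain of type (C2). -/
def IsC2 (φ : MulAut F) : Prop := ∃ c : List (ℕ × ℕ), c ≠ [] ∧ φ = chainC2 c

/-- A positive element: a product of the generators `a` and `b`. -/
def IsPositive (w : F) : Prop := w ∈ Submonoid.closure ({ga, gb} : Set F)

/-- The four automorphisms `δ₁, δ₂, δ₃, δ₄`. -/
def δIdx : Fin 4 → MulAut F := ![δ₁, δ₂, δ₃, δ₄]

/-!
Spell the conjugacy class of `w` by a cyclic word, cut at its letters `xᵢ^±1` into gaps, which are
powers of the other generator `y`. The transvection `xᵢ ↦ xᵢy`, `y ↦ y` (`σ` or `τ`) keeps the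
letters `xᵢ^±1` and adds to the exponent of each gap half the sum of the signs of the two letters
bounding it. Hence cyclic lengths are affine along its iterates as soon as no exponent moves
towards zero, that is, as soon as no letter `y^±1` is opposed to the signs of both neighbouring
letters `xᵢ^±1`.

For `xᵢ = a`, the number of opposed letters is at most `‖w‖`; a factor `σ` decreases it while it is
positive, and a factor `τ` does not increase it. Once it is zero, one more factor `σ` leaves no
subword `a²` or `a⁻²`, so that every gap between letters `b^±1` has exponent `0` or `±1`; after one
factor `τ` none of these exponents can move towards zero any more. So after more than `‖w‖` factors
`σ` and a final `τ`, the increments of cyclic length along the iterates of `τ` are all equal.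
-/

section CyclicWord

open FreeGroup (mk IsCyclicallyReduced)

variable {α : Type*} {L L' : List (α × Bool)} {w : FreeGroup α}

/-- The word `L` is cyclically reduced and, read cyclically, spells the conjugacy class of `w`. -/
def IsCyclicWord (L : List (α × Bool)) (w : FreeGroup α) : Prop :=
  IsCyclicallyReduced L ∧ IsConj (mk L) w

theorem isCyclicallyReduced_iff_cycleChain :
    IsCyclicallyReduced L ↔
      Cycle.Chain (fun x y ↦ x.1 = y.1 → x.2 = y.2) (L : Cycle (α × Bool)) := by
  cases L with
  | nil => simp
  | cons x L =>
    rw [Cycle.chain_coe_cons, ← List.cons_append, List.isChain_append,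
      FreeGroup.isCyclicallyReduced_iff, FreeGroup.IsReduced]
    simp

theorem isCyclicallyReduced_of_isRotated (hL : IsCyclicallyReduced L) (h : L ~r L') :
    IsCyclicallyReduced L' := by
  rwa [isCyclicallyReduced_iff_cycleChain, ← Cycle.coe_eq_coe.2 h,
    ← isCyclicallyReduced_iff_cycleChain]

theorem isConj_mk_of_isRotated (h : L ~r L') : IsConj (mk L) (mk L') := by
  obtain ⟨n, hn, rfl⟩ := List.isRotated_iff_mod.1 h
  rw [List.rotate_eq_drop_append_take hn, ← FreeGroup.mul_mk]
  nth_rewrite 1 [← List.take_append_drop n L]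
  rw [← FreeGroup.mul_mk]
  exact isConj_iff.2 ⟨(mk (L.take n))⁻¹, by group⟩

theorem IsCyclicWord.isRotated (hL : IsCyclicWord L w) (h : L ~r L') : IsCyclicWord L' w :=
  ⟨isCyclicallyReduced_of_isRotated hL.1 h, (isConj_mk_of_isRotated h).symm.trans hL.2⟩

theorem exists_isCyclicWord (w : FreeGroup α) : ∃ L, IsCyclicWord L w := by
  classical
  refine ⟨FreeGroup.reduceCyclically w.toWord,
    FreeGroup.reduceCyclically.isCyclicallyReduced FreeGroup.isReduced_toWord,
    isConj_iff.2 ⟨mk (FreeGroup.reduceCyclically.conjugator w.toWord), ?_⟩⟩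
  rw [FreeGroup.inv_mk, FreeGroup.mul_mk, FreeGroup.mul_mk,
    FreeGroup.reduceCyclically.conj_conjugator_reduceCyclically, FreeGroup.mk_toWord]

variable [DecidableEq α]

theorem freeGroup_norm_pow_le (w : FreeGroup α) (n : ℕ) : (w ^ n).norm ≤ n * w.norm := by
  induction n with
  | zero => simp
  | succ n ih =>
    rw [pow_succ, Nat.succ_mul]
    exact (FreeGroup.norm_mul_le _ _).trans (Nat.add_le_add_right ih _)

theorem norm_mk_pow (hL : IsCyclicallyReduced L) (n : ℕ) : (mk L ^ n).norm = n * L.length := by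
  simp [FreeGroup.pow_mk, FreeGroup.norm, (hL.flatten_replicate n).isReduced.reduce_eq]

-- Conjugation by `g` changes norms by at most `2 * g.norm`, which is negligible for high powers.
theorem IsCyclicWord.length_le_norm (hL : IsCyclicWord L w) : L.length ≤ w.norm := by
  obtain ⟨g, hg⟩ := isConj_iff.1 hL.2.symm
  have norm_le (n : ℕ) : n * L.length ≤ 2 * g.norm + n * w.norm := by
    rw [← norm_mk_pow hL.1 n, ← hg, conj_pow]
    have := FreeGroup.norm_mul_le (g * w ^ n) g⁻¹
    have := FreeGroup.norm_mul_le g (w ^ n)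
    have := freeGroup_norm_pow_le w n
    rw [FreeGroup.norm_inv_eq] at *
    omega
  by_contra! hlt
  have := norm_le (2 * g.norm + 1)
  nlinarith

end CyclicWord

theorem IsCyclicWord.length_eq_cyclen {L : List (Fin 2 × Bool)} {w : F} (hL : IsCyclicWord L w) :
    L.length = cyclen w := by
  apply le_antisymm
  · refine le_csInf ⟨_, 1, rfl⟩ ?_
    rintro _ ⟨g, rfl⟩
    have : IsCyclicWord L (g * w * g⁻¹) := ⟨hL.1, hL.2.trans (isConj_iff.2 ⟨g, rfl⟩)⟩
    exact this.length_le_norm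
  · obtain ⟨g, hg⟩ := isConj_iff.1 hL.2.symm
    exact Nat.sInf_le ⟨g, by rw [hg, len, FreeGroup.toWord_mk, hL.1.isReduced.reduce_eq]⟩

section Transvection

open FreeGroup (of mk)

variable {i : Fin 2} {L : List (Fin 2 × Bool)} {w : F}

/-- The automorphisms `σ` and `τ` indexed by the generator they move, so that one argument covers
both: `transvection i` maps `xᵢ` to `xᵢ * xᵢ₊₁` and fixes the other generator `xᵢ₊₁`. -/
def transvection (i : Fin 2) : MulAut F := ![σ, τ] i

theorem transvection_of_self (i : Fin 2) : transvection i (of i) = of i * of (i + 1) := by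
  match i with
  | 0 => change σ (of 0) = of 0 * of 1; simp [σ, mkAut, ga, gb]
  | 1 => change τ (of 1) = of 1 * of 0; simp [τ, mkAut, ga, gb]

theorem transvection_of_add_one (i : Fin 2) : transvection i (of (i + 1)) = of (i + 1) := by
  match i with
  | 0 => change σ (of 1) = of 1; simp [σ, mkAut, gb]
  | 1 => change τ (of 0) = of 0; simp [τ, mkAut, ga]

theorem transvection_mk_of_forall_ne (h : ∀ x ∈ L, x.1 ≠ i) : transvection i (mk L) = mk L := by
  induction L with
  | nil => exact map_one _
  | cons x L ih =>
    rw [List.forall_mem_cons] at h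
    obtain ⟨k, s⟩ := x
    obtain rfl : k = i + 1 := by lia
    rw [← List.singleton_append, ← FreeGroup.mul_mk, map_mul, ih h.2]
    congr 1
    cases s
    · change transvection i (of (i + 1))⁻¹ = (of (i + 1))⁻¹
      rw [map_inv, transvection_of_add_one]
    · exact transvection_of_add_one i

theorem IsCyclicWord.transvection_of_forall_ne (hL : IsCyclicWord L w) (h : ∀ x ∈ L, x.1 ≠ i) :
    IsCyclicWord L (transvection i w) := by
  refine ⟨hL.1, ?_⟩
  rw [← transvection_mk_of_forall_ne h]
  exact (transvection i).toMonoidHom.map_isConj hL.2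

end Transvection

section Gap

open FreeGroup (of mk)

/-- The reduced word spelling `xₖⁿ`. -/
def powerWord (k : Fin 2) (n : ℤ) : List (Fin 2 × Bool) :=
  List.replicate n.natAbs (k, decide (0 < n))

theorem mk_powerWord (k : Fin 2) (n : ℤ) : mk (powerWord k n) = of k ^ n := by
  have mk_replicate (m : ℕ) (e : Bool) : mk (List.replicate m (k, e)) = mk [(k, e)] ^ m := by
    simp [FreeGroup.pow_mk]
  have mk_false : mk [(k, false)] = (of k)⁻¹ := rfl
  rcases le_or_gt n 0 with hn | hn
  · obtain ⟨m, rfl⟩ := Int.exists_eq_neg_ofNat hn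
    rw [powerWord, mk_replicate, decide_eq_false hn.not_gt, mk_false]
    simp
  · obtain ⟨m, rfl⟩ := Int.eq_ofNat_of_zero_le hn.le
    rw [powerWord, mk_replicate, decide_eq_true hn, Int.natAbs_natCast, zpow_natCast]
    rfl

/-- A stretch of a word in `F` between two consecutive occurrences of the letters `xᵢ^±1`: the signs
of these two letters and the exponent of the power of `xᵢ₊₁` separating them. -/
structure Gap where
  left : Bool
  exp : ℤ
  right : Bool

namespace Gap

/-- The change of the exponent of a gap under `transvection i`. -/
def slope (g : Gap) : ℤ :=
  match g.left, g.right with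
  | true, true => 1
  | false, false => -1
  | _, _ => 0

/-- The image of a gap under `transvection i`. -/
def shift (g : Gap) : Gap := { g with exp := g.exp + g.slope }

/-- The number of steps for which the exponent of the gap still moves towards zero when
`transvection i` is iterated. -/
def defect (g : Gap) : ℕ := (-(g.slope * g.exp)).toNat

/-- The letters bounding the gap do not cancel. -/
def IsReduced (g : Gap) : Prop := g.left ≠ g.right → g.exp ≠ 0

/-- The word of a gap, with the left bounding letter included and the right one excluded, so that
the words of consecutive gaps can be concatenated. -/
def word (i : Fin 2) (g : Gap) : List (Fin 2 × Bool) := (i, g.left) :: powerWord (i + 1) g.exp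

theorem IsReduced.shift {g : Gap} (h : g.IsReduced) : g.shift.IsReduced := by
  rcases g with ⟨_ | _, n, _ | _⟩ <;> simp_all [Gap.IsReduced, Gap.shift, Gap.slope]

theorem shift_defect (g : Gap) : g.shift.defect = g.defect - 1 := by
  rcases g with ⟨_ | _, n, _ | _⟩ <;> simp [Gap.defect, Gap.shift, Gap.slope] <;> omega

theorem natAbs_shift_exp {g : Gap} (h : g.defect = 0) :
    g.shift.exp.natAbs = g.exp.natAbs + g.slope.natAbs := by
  rcases g with ⟨_ | _, n, _ | _⟩ <;> simp_all [Gap.defect, Gap.shift, Gap.slope] <;> omega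

theorem shift_exp_ne_zero {g : Gap} (h : g.defect = 0) (hlr : g.left = g.right) :
    g.shift.exp ≠ 0 := by
  rcases g with ⟨_ | _, n, _ | _⟩ <;> simp_all [Gap.defect, Gap.shift, Gap.slope] <;> omega

theorem shift_defect_eq_zero {g : Gap} (h : g.exp.natAbs ≤ 1) : g.shift.defect = 0 := by
  rcases g with ⟨_ | _, n, _ | _⟩ <;> simp_all [Gap.defect, Gap.shift, Gap.slope] <;> omega

end Gap

theorem sum_defect_map_shift_le (Γ : List Gap) :
    ((Γ.map Gap.shift).map Gap.defect).sum ≤ (Γ.map Gap.defect).sum - 1 := by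
  induction Γ with
  | nil => rfl
  | cons g Γ ih =>
    simp only [List.map_cons, List.sum_cons, Gap.shift_defect] at ih ⊢
    omega

/-- The gaps in the list follow each other: each starts with the sign at which its predecessor ends,
the first one at `e` and the last one ends at `z`. -/
def IsGapPath : Bool → List Gap → Bool → Prop
  | e, [], z => e = z
  | e, g :: Γ, z => g.left = e ∧ IsGapPath g.right Γ z

/-- The gaps in the list follow each other cyclically. -/
def IsGapLoop (Γ : List Gap) : Prop := ∃ e, IsGapPath e Γ e

/-- The concatenation of the words of a list of gaps. -/
def gapWord (i : Fin 2) (Γ : List Gap) : List (Fin 2 × Bool) := Γ.flatMap (Gap.word i)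

theorem IsGapPath.map_shift {Γ : List Gap} {e z : Bool} (h : IsGapPath e Γ z) :
    IsGapPath e (Γ.map Gap.shift) z := by
  induction Γ generalizing e with
  | nil => exact h
  | cons g Γ ih => exact ⟨h.1, ih h.2⟩

theorem IsGapLoop.map_shift {Γ : List Gap} (h : IsGapLoop Γ) : IsGapLoop (Γ.map Gap.shift) :=
  h.imp fun _ he ↦ he.map_shift

/-- The discrepancy between `transvection i` and `Gap.shift` at the ends of a gap path, in front of
a letter `xᵢ^±1` of sign `e`: the factor `xᵢ₊₁⁻¹` in the image `xᵢ₊₁⁻¹ * xᵢ⁻¹` of `xᵢ⁻¹` belongs to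
the gap before that letter, whereas `xᵢ * xᵢ₊₁` starts with `xᵢ`. -/
def boundaryFactor (i : Fin 2) (e : Bool) : F := if e then 1 else of (i + 1)

theorem transvection_gap_word (i : Fin 2) (g : Gap) :
    transvection i (mk (g.word i)) =
      (boundaryFactor i g.left)⁻¹ * mk (g.shift.word i) * boundaryFactor i g.right := by
  have mk_word (g : Gap) :
      mk (g.word i) = of i ^ (if g.left then 1 else -1 : ℤ) * of (i + 1) ^ g.exp := by
    rw [Gap.word, ← List.singleton_append, ← FreeGroup.mul_mk, mk_powerWord]
    cases g.left <;> simp <;> rfl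
  rw [mk_word, mk_word, map_mul, map_zpow, map_zpow, transvection_of_self, transvection_of_add_one]
  rcases g with ⟨_ | _, n, _ | _⟩ <;> simp [Gap.shift, Gap.slope, boundaryFactor] <;> group

theorem transvection_gapWord (i : Fin 2) {Γ : List Gap} {e z : Bool} (h : IsGapPath e Γ z) :
    transvection i (mk (gapWord i Γ)) =
      (boundaryFactor i e)⁻¹ * mk (gapWord i (Γ.map Gap.shift)) * boundaryFactor i z := by
  induction Γ generalizing e with
  | nil => obtain rfl : e = z := h; simp [gapWord, ← FreeGroup.one_eq_mk]
  | cons g Γ ih =>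
    obtain ⟨rfl, h⟩ := h
    simp only [gapWord, List.flatMap_cons, List.map_cons, ← FreeGroup.mul_mk, map_mul] at ih ⊢
    rw [ih h, transvection_gap_word]
    group

end Gap

section GapForm

variable {i : Fin 2} {L L' : List (Fin 2 × Bool)} {Γ : List Gap} {e z : Bool} {w : F}

theorem exists_gapWord_append_eq_cons (i : Fin 2) (h : IsGapPath e Γ z) :
    ∃ L, gapWord i Γ ++ [(i, z)] = (i, e) :: L := by
  cases Γ with
  | nil => obtain rfl : e = z := h; exact ⟨[], rfl⟩
  | cons g Γ => obtain ⟨rfl, -⟩ := h; exact ⟨_, rfl⟩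

theorem isChain_gapWord_iff {R : Fin 2 × Bool → Fin 2 × Bool → Prop} (h : IsGapPath e Γ z) :
    (gapWord i Γ ++ [(i, z)]).IsChain R ↔
      ∀ g ∈ Γ, (g.word i ++ [(i, g.right)]).IsChain R := by
  induction Γ generalizing e with
  | nil => simp [gapWord]
  | cons g Γ ih =>
    obtain ⟨L, hL⟩ := exists_gapWord_append_eq_cons i h.2
    have hcons : gapWord i (g :: Γ) ++ [(i, z)] = g.word i ++ (i, g.right) :: L := by
      rw [← hL, gapWord, List.flatMap_cons, List.append_assoc, gapWord]
    rw [hcons, List.isChain_split, ← hL, ih h.2, List.forall_mem_cons]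

theorem cycleChain_gapWord_iff {R : Fin 2 × Bool → Fin 2 × Bool → Prop} (h : IsGapLoop Γ) :
    Cycle.Chain R (gapWord i Γ : Cycle (Fin 2 × Bool)) ↔
      ∀ g ∈ Γ, (g.word i ++ [(i, g.right)]).IsChain R := by
  obtain ⟨e, h⟩ := h
  rw [← isChain_gapWord_iff h]
  cases Γ with
  | nil => simp [gapWord]
  | cons g Γ =>
    obtain ⟨rfl, -⟩ := h
    exact Cycle.chain_coe_cons _ _ _

theorem isChain_cons_replicate_append_iff {α : Type*} {R : α → α → Prop} {x y z : α} (m : ℕ) :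
    (x :: List.replicate m y ++ [z]).IsChain R ↔
      (m = 0 → R x z) ∧ (m ≠ 0 → R x y ∧ R y z) ∧ (2 ≤ m → R y y) := by
  induction m generalizing x with
  | zero => simp
  | succ m ih =>
    rw [List.replicate_succ, List.cons_append, List.cons_append, List.isChain_cons_cons,
      ← List.cons_append, ih]
    grind

/-- Cyclic words without a subword `xₖ²` or `xₖ⁻²`, also across the end of the list. -/
def IsSparse (k : Fin 2) (L : List (Fin 2 × Bool)) : Prop :=
  Cycle.Chain (fun x y ↦ x.1 = k → x ≠ y) (L : Cycle (Fin 2 × Bool))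

theorem IsSparse.isRotated (hL : IsSparse i L) (h : L ~r L') : IsSparse i L' := by
  rwa [IsSparse, ← Cycle.coe_eq_coe.2 h]

theorem isSparse_of_forall_ne (h : ∀ x ∈ L, x.1 ≠ i) : IsSparse i L :=
  Cycle.chain_of_pairwise fun x hx _ _ hi ↦ absurd hi (h x hx)

theorem isCyclicallyReduced_gapWord_iff (h : IsGapLoop Γ) :
    FreeGroup.IsCyclicallyReduced (gapWord i Γ) ↔ ∀ g ∈ Γ, g.IsReduced := by
  rw [isCyclicallyReduced_iff_cycleChain, cycleChain_gapWord_iff h]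
  simp only [Gap.word, powerWord, isChain_cons_replicate_append_iff, Gap.IsReduced]
  have : i + 1 ≠ i := by simp
  grind -ring

theorem isSparse_self_gapWord_iff (h : IsGapLoop Γ) :
    IsSparse i (gapWord i Γ) ↔ ∀ g ∈ Γ, g.left = g.right → g.exp ≠ 0 := by
  rw [IsSparse, cycleChain_gapWord_iff h]
  simp only [Gap.word, powerWord, isChain_cons_replicate_append_iff]
  have : i + 1 ≠ i := by simp
  grind -ring

theorem isSparse_add_one_gapWord_iff (h : IsGapLoop Γ) :
    IsSparse (i + 1) (gapWord i Γ) ↔ ∀ g ∈ Γ, g.exp.natAbs ≤ 1 := by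
  rw [IsSparse, cycleChain_gapWord_iff h]
  simp only [Gap.word, powerWord, isChain_cons_replicate_append_iff]
  have : i + 1 ≠ i := by simp
  grind -ring

/-- The conjugacy class of `w` is spelled by the closed sequence of gaps `Γ` between the letters
`xᵢ^±1`. -/
def IsGapForm (i : Fin 2) (Γ : List Gap) (w : F) : Prop :=
  IsGapLoop Γ ∧ IsCyclicWord (gapWord i Γ) w

theorem IsGapForm.isReduced (h : IsGapForm i Γ w) : ∀ g ∈ Γ, g.IsReduced :=
  (isCyclicallyReduced_gapWord_iff h.1).1 h.2.1

theorem IsGapForm.map_shift (h : IsGapForm i Γ w) :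
    IsGapForm i (Γ.map Gap.shift) (transvection i w) := by
  obtain ⟨e, hpath⟩ := h.1
  refine ⟨h.1.map_shift, (isCyclicallyReduced_gapWord_iff h.1.map_shift).2 ?_, ?_⟩
  · simpa using fun g hg ↦ (h.isReduced g hg).shift
  · have hconj := (transvection i).toMonoidHom.map_isConj h.2.2
    refine .trans (isConj_iff.2 ⟨(boundaryFactor i e)⁻¹, ?_⟩) hconj
    simp [transvection_gapWord i hpath]

theorem IsGapForm.cyclen_eq (h : IsGapForm i Γ w) :
    cyclen w = (Γ.map fun g ↦ 1 + g.exp.natAbs).sum := by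
  rw [← h.2.length_eq_cyclen, gapWord, List.length_flatMap]
  simp [Gap.word, powerWord, add_comm]

theorem IsGapForm.cyclen_transvection_pow (hΓ : IsGapForm i Γ w) (h : ∀ g ∈ Γ, g.defect = 0)
    (j : ℕ) :
    cyclen ((transvection i ^ j) w) = cyclen w + j * (Γ.map fun g ↦ g.slope.natAbs).sum := by
  induction j generalizing Γ w with
  | zero => simp
  | succ j ih =>
    have cyclen_step : cyclen (transvection i w) =
        cyclen w + (Γ.map fun g ↦ g.slope.natAbs).sum := by
      rw [hΓ.map_shift.cyclen_eq, hΓ.cyclen_eq, List.map_map, ← List.sum_map_add]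
      congr 1
      refine List.map_congr_left fun g hg ↦ ?_
      simp only [Function.comp_apply, Gap.natAbs_shift_exp (h g hg), add_assoc]
    have slope_map_shift : ((Γ.map Gap.shift).map fun g ↦ g.slope.natAbs) =
        Γ.map fun g ↦ g.slope.natAbs := by
      rw [List.map_map]
      rfl
    have defect_map_shift : ∀ g ∈ Γ.map Gap.shift, g.defect = 0 := by
      simpa [Gap.shift_defect] using fun g hg ↦ by simp [h g hg]
    rw [pow_succ, MulAut.mul_apply, ih hΓ.map_shift defect_map_shift, cyclen_step, slope_map_shift]
    ring

theorem cons_powerWord_of_isReduced {k : Fin 2} {s : Bool} {n : ℤ}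
    (h : FreeGroup.IsReduced ((k, s) :: powerWord k n)) :
    (k, s) :: powerWord k n = powerWord k (n + if s then 1 else -1) := by
  have hs : n = 0 ∨ decide (0 < n) = s := by
    by_contra! hn
    obtain ⟨m, hm⟩ := Nat.exists_eq_succ_of_ne_zero (Int.natAbs_ne_zero.2 hn.1)
    simp_all [powerWord, FreeGroup.IsReduced, List.replicate_succ]
  have natAbs_add : (n + if s then 1 else -1).natAbs = n.natAbs + 1 := by grind
  have sign_add : decide (0 < n + if s then 1 else -1) = s := by grind
  rw [powerWord, powerWord, natAbs_add, sign_add, List.replicate_succ]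
  rcases hs with rfl | hs
  · simp
  · rw [hs]

theorem exists_eq_powerWord_append_gapWord (i : Fin 2) (z : Bool)
    (hL : FreeGroup.IsReduced L) :
    ∃ n e Γ, IsGapPath e Γ z ∧ L = powerWord (i + 1) n ++ gapWord i Γ := by
  induction L with
  | nil => exact ⟨0, z, [], rfl, rfl⟩
  | cons x L ih =>
    obtain ⟨k, s⟩ := x
    obtain ⟨n, e, Γ, hΓ, rfl⟩ := ih hL.tail
    obtain rfl | rfl : k = i ∨ k = i + 1 := by lia
    · exact ⟨0, s, ⟨s, n, e⟩ :: Γ, ⟨rfl, hΓ⟩, by simp [gapWord, Gap.word, powerWord]⟩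
    · refine ⟨n + if s then 1 else -1, e, Γ, hΓ, ?_⟩
      rw [← cons_powerWord_of_isReduced (hL.infix ⟨[], gapWord i Γ, by simp⟩), List.cons_append]

theorem IsCyclicWord.exists_isGapForm (hL : IsCyclicWord L w) (hi : ∃ x ∈ L, x.1 = i) :
    ∃ Γ, IsGapForm i Γ w ∧ L ~r gapWord i Γ := by
  obtain ⟨⟨k, s⟩, hmem, hk⟩ := hi
  obtain rfl : k = i := hk
  obtain ⟨A, B, rfl⟩ := List.append_of_mem hmem
  have hrot : A ++ (k, s) :: B ~r (k, s) :: (B ++ A) := List.isRotated_append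
  have hcyc := hL.isRotated hrot
  obtain ⟨n, e, Γ, hΓ, hBA⟩ := exists_eq_powerWord_append_gapWord k s hcyc.1.isReduced.tail
  have hword : (k, s) :: (B ++ A) = gapWord k (⟨s, n, e⟩ :: Γ) := by
    rw [List.tail_cons] at hBA
    rw [hBA]
    rfl
  rw [hword] at hrot hcyc
  exact ⟨⟨s, n, e⟩ :: Γ, ⟨⟨s, rfl, hΓ⟩, hcyc⟩, hrot⟩

theorem IsCyclicWord.exists_isGapForm_or_forall_ne (i : Fin 2) (hL : IsCyclicWord L w) :
    (∃ Γ, IsGapForm i Γ w ∧ L ~r gapWord i Γ) ∨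
      (∀ x ∈ L, x.1 ≠ i) ∧ IsCyclicWord L (transvection i w) := by
  by_cases! hi : ∃ x ∈ L, x.1 = i
  · exact .inl (hL.exists_isGapForm hi)
  · exact .inr ⟨hi, hL.transvection_of_forall_ne hi⟩

end GapForm

section Opposed

variable {i : Fin 2} {L L' : List (Fin 2 × Bool)} {Γ : List Gap} {e s s' t t' z : Bool}

/-- The sign of the last letter `xᵢ^±1` of `L`, with default `s`. -/
def lastSign (i : Fin 2) (s : Bool) (L : List (Fin 2 × Bool)) : Bool :=
  L.foldl (fun s x ↦ if x.1 = i then x.2 else s) s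

/-- The sign of the first letter `xᵢ^±1` of `L`, with default `z`. -/
def firstSign (i : Fin 2) (L : List (Fin 2 × Bool)) (z : Bool) : Bool :=
  L.foldr (fun x z ↦ if x.1 = i then x.2 else z) z

/-- The number of opposed letters (see `opposed`) of a linear word `L` that is preceded by a letter
`xᵢ^±1` of sign `s` and followed by one of sign `z`. -/
def opposedCount (i : Fin 2) : Bool → List (Fin 2 × Bool) → Bool → ℕ
  | _, [], _ => 0
  | s, x :: L, z =>
    (if x.1 ≠ i ∧ s = !x.2 ∧ firstSign i L z = !x.2 then 1 else 0) +
      opposedCount i (lastSign i s [x]) L z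

/-- The number of letters of the cyclic word `L` other than `xᵢ^±1` whose sign is opposite to both
the preceding and the following letter `xᵢ^±1`. The distinct default signs make it vanish if there
are no letters `xᵢ^±1`. -/
def opposed (i : Fin 2) (L : List (Fin 2 × Bool)) : ℕ :=
  opposedCount i (lastSign i true L) L (firstSign i L false)

theorem lastSign_singleton (x : Fin 2 × Bool) :
    lastSign i s [x] = if x.1 = i then x.2 else s :=
  rfl

theorem firstSign_eq_lastSign_reverse : firstSign i L z = lastSign i z L.reverse := by
  rw [lastSign, List.foldl_reverse, firstSign]

theorem lastSign_append : lastSign i s (L ++ L') = lastSign i (lastSign i s L) L' :=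
  List.foldl_append

theorem firstSign_append : firstSign i (L ++ L') z = firstSign i L (firstSign i L' z) :=
  List.foldr_append

theorem opposedCount_append :
    opposedCount i s (L ++ L') z =
      opposedCount i s L (firstSign i L' z) + opposedCount i (lastSign i s L) L' z := by
  induction L generalizing s with
  | nil => simp [opposedCount, lastSign]
  | cons x L ih =>
    rw [List.cons_append, opposedCount, opposedCount, ih, firstSign_append, ← lastSign_append]
    exact (add_assoc ..).symm

theorem opposedCount_le_length : opposedCount i s L z ≤ L.length := by
  induction L generalizing s with
  | nil => rfl
  | cons x L ih =>
    have := ih (s := lastSign i s [x])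
    rw [opposedCount, List.length_cons]
    split_ifs <;> omega

theorem lastSign_eq_self_or_const (i : Fin 2) (L : List (Fin 2 × Bool)) :
    (∀ s, lastSign i s L = s) ∨ ∃ c, ∀ s, lastSign i s L = c := by
  induction L with
  | nil => exact .inl fun s ↦ rfl
  | cons x L ih =>
    simp only [← List.singleton_append (l := L), lastSign_append]
    rcases ih with h | ⟨c, h⟩
    · by_cases hx : x.1 = i
      · exact .inr ⟨x.2, fun s ↦ by rw [h, lastSign_singleton, if_pos hx]⟩
      · exact .inl fun s ↦ by rw [h, lastSign_singleton, if_neg hx]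
    · exact .inr ⟨c, fun s ↦ h _⟩

theorem firstSign_eq_self_or_const (i : Fin 2) (L : List (Fin 2 × Bool)) :
    (∀ z, firstSign i L z = z) ∨ ∃ c, ∀ z, firstSign i L z = c := by
  simp only [firstSign_eq_lastSign_reverse]
  exact lastSign_eq_self_or_const i L.reverse

theorem opposed_append_comm : opposed i (L ++ L') = opposed i (L' ++ L) := by
  simp only [opposed, opposedCount_append, lastSign_append, firstSign_append]
  rcases lastSign_eq_self_or_const i L with hL | ⟨c, hL⟩ <;>
  rcases lastSign_eq_self_or_const i L' with hL' | ⟨c', hL'⟩ <;>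
  rcases firstSign_eq_self_or_const i L with hL₁ | ⟨c₁, hL₁⟩ <;>
  rcases firstSign_eq_self_or_const i L' with hL₁' | ⟨c₁', hL₁'⟩ <;>
  simp only [hL, hL', hL₁, hL₁', add_comm]

theorem opposed_eq_of_isRotated (h : L ~r L') : opposed i L = opposed i L' := by
  obtain ⟨n, hn, rfl⟩ := List.isRotated_iff_mod.1 h
  rw [List.rotate_eq_drop_append_take hn, opposed_append_comm, List.take_append_drop]

theorem lastSign_of_forall_ne (h : ∀ x ∈ L, x.1 ≠ i) : lastSign i s L = s := by
  induction L with
  | nil => rfl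
  | cons x L ih =>
    rw [List.forall_mem_cons] at h
    rw [← List.singleton_append, lastSign_append, lastSign_singleton, if_neg h.1, ih h.2]

theorem firstSign_of_forall_ne (h : ∀ x ∈ L, x.1 ≠ i) : firstSign i L z = z := by
  rw [firstSign_eq_lastSign_reverse, lastSign_of_forall_ne (by simpa using h)]

theorem opposedCount_of_forall_ne (h : ∀ x ∈ L, x.1 ≠ i) :
    opposedCount i s L z = (L.filter fun x ↦ s = !x.2 ∧ z = !x.2).length := by
  induction L with
  | nil => rfl
  | cons x L ih =>
    rw [List.forall_mem_cons] at h
    rw [opposedCount, firstSign_of_forall_ne h.2, lastSign_singleton, if_neg h.1, ih h.2,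
      List.filter_cons]
    split_ifs <;> simp_all [add_comm]

theorem opposed_of_forall_ne (h : ∀ x ∈ L, x.1 ≠ i) : opposed i L = 0 := by
  rw [opposed, lastSign_of_forall_ne h, firstSign_of_forall_ne h, opposedCount_of_forall_ne h]
  simp

theorem opposedCount_word_self (g : Gap) : opposedCount i s (g.word i) g.right = g.defect := by
  have hpow : ∀ x ∈ powerWord (i + 1) g.exp, x.1 ≠ i := by simp [powerWord]
  rw [Gap.word, opposedCount, lastSign_singleton, if_pos rfl, opposedCount_of_forall_ne hpow]
  rcases g with ⟨_ | _, n, _ | _⟩ <;>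
    simp [powerWord, Gap.defect, Gap.slope, List.filter_replicate] <;> split_ifs <;> simp <;> omega

theorem firstSign_self_gapWord (h : IsGapPath e Γ z) : firstSign i (gapWord i Γ) z = e := by
  cases Γ with
  | nil => exact h.symm
  | cons g Γ =>
    obtain ⟨rfl, -⟩ := h
    exact if_pos rfl

theorem opposedCount_self_gapWord (h : IsGapPath e Γ z) :
    opposedCount i s (gapWord i Γ) z = (Γ.map Gap.defect).sum := by
  induction Γ generalizing e s with
  | nil => rfl
  | cons g Γ ih =>
    have hcons : gapWord i (g :: Γ) = g.word i ++ gapWord i Γ := rfl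
    rw [hcons, opposedCount_append, firstSign_self_gapWord h.2, opposedCount_word_self, ih h.2,
      List.map_cons, List.sum_cons]

theorem opposed_self_gapWord (h : IsGapLoop Γ) :
    opposed i (gapWord i Γ) = (Γ.map Gap.defect).sum := by
  obtain ⟨e, h⟩ := h
  cases Γ with
  | nil => rfl
  | cons g Γ =>
    have firstSign_eq : firstSign i (gapWord i (g :: Γ)) false = e := by
      obtain ⟨rfl, -⟩ := h
      exact if_pos rfl
    rw [opposed, firstSign_eq, opposedCount_self_gapWord h]

theorem defect_eq_zero_of_opposed_le (h : IsGapLoop Γ) (hn : opposed i (gapWord i Γ) ≤ 0) :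
    ∀ g ∈ Γ, g.defect = 0 := by
  rw [opposed_self_gapWord h, Nat.le_zero, List.sum_eq_zero_iff] at hn
  simpa using hn

/-- The sign of `n`, with default `s` for `n = 0`. -/
def signOr (n : ℤ) (s : Bool) : Bool := if n = 0 then s else decide (0 < n)

theorem lastSign_powerWord (k : Fin 2) (n : ℤ) : lastSign k s (powerWord k n) = signOr n s := by
  rcases eq_or_ne n 0 with rfl | hn
  · rfl
  · obtain ⟨m, hm⟩ := Nat.exists_eq_succ_of_ne_zero (Int.natAbs_ne_zero.2 hn)
    rw [powerWord, hm, List.replicate_succ', lastSign_append, lastSign_singleton, if_pos rfl,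
      signOr, if_neg hn]

theorem firstSign_powerWord (k : Fin 2) (n : ℤ) : firstSign k (powerWord k n) z = signOr n z := by
  rw [firstSign_eq_lastSign_reverse, powerWord, List.reverse_replicate, ← powerWord,
    lastSign_powerWord]

theorem lastSign_add_one_word (g : Gap) : lastSign (i + 1) s (g.word i) = signOr g.exp s := by
  rw [Gap.word, ← List.singleton_append, lastSign_append, lastSign_powerWord, lastSign_singleton,
    if_neg (by simp)]

theorem opposedCount_powerWord_self (k : Fin 2) (n : ℤ) :
    opposedCount k s (powerWord k n) z = 0 := by
  rw [powerWord]
  induction n.natAbs generalizing s with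
  | zero => rfl
  | succ m ih => simp [List.replicate_succ, opposedCount, ih]

theorem opposedCount_add_one_word (g : Gap) :
    opposedCount (i + 1) s (g.word i) z =
      if s = !g.left ∧ signOr g.exp z = !g.left then 1 else 0 := by
  simp [Gap.word, opposedCount, opposedCount_powerWord_self, firstSign_powerWord]

-- `transvection i` pushes the exponents of a gap towards the signs of the letters bounding it.
theorem Gap.IsReduced.signOr_exp {g : Gap} (hg : g.IsReduced) (he : e = g.left ∨ e = g.right)
    (h : signOr g.shift.exp s' = !e) (s : Bool) : signOr g.exp s = !e := by
  rcases g with ⟨_ | _, n, _ | _⟩ <;>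
    simp_all [Gap.IsReduced, signOr, Gap.shift, Gap.slope] <;> grind

theorem lastSign_add_one_gapWord_map_shift (h : IsGapPath e Γ z) (hred : ∀ g ∈ Γ, g.IsReduced)
    (hs : s' = !e → s = !e)
    (hz : lastSign (i + 1) s' (gapWord i (Γ.map Gap.shift)) = !z) :
    lastSign (i + 1) s (gapWord i Γ) = !z := by
  induction Γ generalizing e s s' with
  | nil => obtain rfl : e = z := h; exact hs hz
  | cons g Γ ih =>
    rw [List.forall_mem_cons] at hred
    simp only [gapWord, List.map_cons, List.flatMap_cons, lastSign_append,
      lastSign_add_one_word] at hz ih ⊢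
    exact ih h.2 hred.2 (fun h ↦ hred.1.signOr_exp (.inr rfl) h _) hz

theorem opposedCount_add_one_gapWord_map_shift_le (h : IsGapPath e Γ z)
    (hred : ∀ g ∈ Γ, g.IsReduced) (hs : s' = !e → s = !e) :
    opposedCount (i + 1) s' (gapWord i (Γ.map Gap.shift)) t' ≤
      opposedCount (i + 1) s (gapWord i Γ) t := by
  induction Γ generalizing e s s' with
  | nil => rfl
  | cons g Γ ih =>
    obtain ⟨rfl, h⟩ := h
    rw [List.forall_mem_cons] at hred
    simp only [gapWord, List.map_cons, List.flatMap_cons, opposedCount_append,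
      opposedCount_add_one_word, lastSign_add_one_word] at ih ⊢
    refine add_le_add ?_ (ih h hred.2 fun h ↦ hred.1.signOr_exp (.inr rfl) h _)
    split_ifs with h₁ h₂
    · exact le_rfl
    · exact absurd ⟨hs h₁.1, hred.1.signOr_exp (.inl rfl) h₁.2 _⟩ h₂
    all_goals exact Nat.zero_le _

theorem opposed_add_one_gapWord_map_shift_le (h : IsGapLoop Γ) (hred : ∀ g ∈ Γ, g.IsReduced) :
    opposed (i + 1) (gapWord i (Γ.map Gap.shift)) ≤ opposed (i + 1) (gapWord i Γ) := by
  obtain ⟨e, h⟩ := h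
  exact opposedCount_add_one_gapWord_map_shift_le h hred
    (lastSign_add_one_gapWord_map_shift h hred id)

end Opposed

section Dynamics

variable {i : Fin 2} {L : List (Fin 2 × Bool)} {w : F} {n : ℕ}

/-- The conjugacy class of `w` is spelled by a cyclic word with at most `n` letters opposed to their
neighbours `xᵢ^±1`. This bounds the number of times that `transvection i` can cause cancellation. -/
def HasOpposedLE (i : Fin 2) (n : ℕ) (w : F) : Prop :=
  ∃ L, IsCyclicWord L w ∧ opposed i L ≤ n

theorem hasOpposedLE_cyclen (i : Fin 2) (w : F) : HasOpposedLE i (cyclen w) w := by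
  obtain ⟨L, hL⟩ := exists_isCyclicWord w
  exact ⟨L, hL, hL.length_eq_cyclen ▸ opposedCount_le_length⟩

theorem HasOpposedLE.transvection_self (h : HasOpposedLE i n w) :
    HasOpposedLE i (n - 1) (transvection i w) := by
  obtain ⟨L, hL, hn⟩ := h
  obtain ⟨Γ, hΓ, hrot⟩ | ⟨hi, hL'⟩ := hL.exists_isGapForm_or_forall_ne i
  · refine ⟨_, hΓ.map_shift.2, ?_⟩
    rw [opposed_eq_of_isRotated hrot, opposed_self_gapWord hΓ.1] at hn
    rw [opposed_self_gapWord hΓ.map_shift.1]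
    exact (sum_defect_map_shift_le Γ).trans (Nat.sub_le_sub_right hn 1)
  · exact ⟨L, hL', (opposed_of_forall_ne hi).trans_le (Nat.zero_le _)⟩

theorem HasOpposedLE.transvection_of_add_one (h : HasOpposedLE (i + 1) n w) :
    HasOpposedLE (i + 1) n (transvection i w) := by
  obtain ⟨L, hL, hn⟩ := h
  obtain ⟨Γ, hΓ, hrot⟩ | ⟨-, hL'⟩ := hL.exists_isGapForm_or_forall_ne i
  · rw [opposed_eq_of_isRotated hrot] at hn
    exact ⟨_, hΓ.map_shift.2, (opposed_add_one_gapWord_map_shift_le hΓ.1 hΓ.isReduced).trans hn⟩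
  · exact ⟨L, hL', hn⟩

theorem HasOpposedLE.transvection_self_pow (h : HasOpposedLE i n w) (j : ℕ) :
    HasOpposedLE i (n - j) ((transvection i ^ j) w) := by
  induction j with
  | zero => exact h
  | succ j ih =>
    rw [pow_succ', MulAut.mul_apply]
    exact ih.transvection_self

theorem HasOpposedLE.transvection_pow_of_add_one (h : HasOpposedLE (i + 1) n w) (j : ℕ) :
    HasOpposedLE (i + 1) n ((transvection i ^ j) w) := by
  induction j with
  | zero => exact h
  | succ j ih =>
    rw [pow_succ', MulAut.mul_apply]
    exact ih.transvection_of_add_one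

theorem HasOpposedLE.exists_isSparse (h : HasOpposedLE i 0 w) :
    ∃ L, IsCyclicWord L (transvection i w) ∧ IsSparse i L := by
  obtain ⟨L, hL, hn⟩ := h
  obtain ⟨Γ, hΓ, hrot⟩ | ⟨hi, hL'⟩ := hL.exists_isGapForm_or_forall_ne i
  · rw [opposed_eq_of_isRotated hrot] at hn
    have hdefect := defect_eq_zero_of_opposed_le hΓ.1 hn
    refine ⟨_, hΓ.map_shift.2, (isSparse_self_gapWord_iff hΓ.map_shift.1).2 ?_⟩
    exact List.forall_mem_map.2 fun g hg ↦ Gap.shift_exp_ne_zero (hdefect g hg)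
  · exact ⟨L, hL', isSparse_of_forall_ne hi⟩

theorem IsCyclicWord.hasOpposedLE_of_isSparse (hL : IsCyclicWord L w) (h : IsSparse (i + 1) L) :
    HasOpposedLE i 0 (transvection i w) := by
  obtain ⟨Γ, hΓ, hrot⟩ | ⟨hi, hL'⟩ := hL.exists_isGapForm_or_forall_ne i
  · have hexp := (isSparse_add_one_gapWord_iff hΓ.1).1 (h.isRotated hrot)
    refine ⟨_, hΓ.map_shift.2, ?_⟩
    rw [opposed_self_gapWord hΓ.map_shift.1, Nat.le_zero, List.sum_eq_zero_iff]
    simpa using fun g hg ↦ Gap.shift_defect_eq_zero (hexp g hg)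
  · exact ⟨L, hL', (opposed_of_forall_ne hi).le⟩

theorem HasOpposedLE.transvection_transvection (h : HasOpposedLE (i + 1) 0 w) :
    HasOpposedLE i 0 (transvection i (transvection (i + 1) w)) := by
  obtain ⟨L, hL, hsparse⟩ := h.exists_isSparse
  exact hL.hasOpposedLE_of_isSparse hsparse

theorem HasOpposedLE.exists_cyclen_transvection_pow (h : HasOpposedLE i 0 w) :
    ∃ d, ∀ j, cyclen ((transvection i ^ j) w) = cyclen w + j * d := by
  obtain ⟨L, hL, hn⟩ := h
  obtain ⟨Γ, hΓ, hrot⟩ | ⟨hi, -⟩ := hL.exists_isGapForm_or_forall_ne i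
  · rw [opposed_eq_of_isRotated hrot] at hn
    exact ⟨_, hΓ.cyclen_transvection_pow (defect_eq_zero_of_opposed_le hΓ.1 hn)⟩
  · refine ⟨0, fun j ↦ ?_⟩
    have hLj : IsCyclicWord L ((transvection i ^ j) w) := by
      induction j with
      | zero => exact hL
      | succ j ih =>
        rw [pow_succ', MulAut.mul_apply]
        exact ih.transvection_of_forall_ne hi
    rw [← hLj.length_eq_cyclen, ← hL.length_eq_cyclen, mul_zero, add_zero]

theorem HasOpposedLE.cyclen_transvection_pow_succ_eq_iff (h : HasOpposedLE i 0 w) (j : ℕ) :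
    cyclen ((transvection i ^ (j + 1)) w) = cyclen ((transvection i ^ j) w) ↔
      cyclen (transvection i w) = cyclen w := by
  obtain ⟨d, hd⟩ := h.exists_cyclen_transvection_pow
  have hd₁ := hd 1
  rw [pow_one, one_mul] at hd₁
  rw [hd, hd, hd₁, Nat.succ_mul]
  omega

end Dynamics

section Chain

variable {c : List (ℕ × ℕ)} {n : ℕ} {w : F}

theorem chainC1_cons_apply (p : ℕ × ℕ) (c : List (ℕ × ℕ)) (w : F) :
    chainC1 (p :: c) w = (τ ^ p.2) ((σ ^ p.1) (chainC1 c w)) := by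
  rw [chainC1, List.map_cons, List.prod_cons, MulAut.mul_apply, MulAut.mul_apply, chainC1]

theorem sigmaCount_cons (p : ℕ × ℕ) (c : List (ℕ × ℕ)) :
    sigmaCount (p :: c) = p.1 + sigmaCount c := by
  rw [sigmaCount, List.map_cons, List.sum_cons, sigmaCount]

theorem HasOpposedLE.chainC1_apply (h : HasOpposedLE 0 n w) (c : List (ℕ × ℕ)) :
    HasOpposedLE 0 (n - sigmaCount c) (chainC1 c w) := by
  induction c with
  | nil => exact h
  | cons p c ih =>
    rw [chainC1_cons_apply, sigmaCount_cons, add_comm, ← Nat.sub_sub]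
    exact (ih.transvection_self_pow p.1).transvection_pow_of_add_one (i := 1) p.2

theorem HasOpposedLE.tau_chainC1_apply (h : HasOpposedLE 0 n w) (hc : n < sigmaCount c) :
    HasOpposedLE 1 0 (τ (chainC1 c w)) := by
  induction c with
  | nil => simp [sigmaCount] at hc
  | cons p c ih =>
    obtain ⟨l, m⟩ := p
    rw [sigmaCount_cons] at hc
    have tau_sigma_pow : HasOpposedLE 1 0 (τ ((σ ^ l) (chainC1 c w))) := by
      cases l with
      | zero => exact ih (by omega)
      | succ l =>
        have hzero : HasOpposedLE 0 0 ((σ ^ l) (chainC1 c w)) := by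
          have := (h.chainC1_apply c).transvection_self_pow l
          rwa [show n - sigmaCount c - l = 0 by dsimp only at hc; omega] at this
        rw [pow_succ', MulAut.mul_apply]
        exact hzero.transvection_transvection (i := 1)
    rw [chainC1_cons_apply, ← MulAut.mul_apply, ← pow_succ', pow_succ, MulAut.mul_apply]
    have tau_pow := tau_sigma_pow.transvection_self_pow m
    rw [Nat.zero_sub] at tau_pow
    exact tau_pow

theorem cyclen_tau_pow_succ_eq_iff (hc : cyclen w < sigmaCount c) (j : ℕ) :
    cyclen ((τ ^ (j + 1)) ((τ * chainC1 c) w)) = cyclen ((τ ^ j) ((τ * chainC1 c) w)) ↔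
      cyclen (τ ((τ * chainC1 c) w)) = cyclen ((τ * chainC1 c) w) :=
  ((hasOpposedLE_cyclen 0 w).tau_chainC1_apply hc).cyclen_transvection_pow_succ_eq_iff j

end Chain

theorem stmt11_general (u v : F) (c : List (ℕ × ℕ)) (hu : cyclen u < sigmaCount c)
    (hv : cyclen v < sigmaCount c) (j : ℕ)
    (H : cyclen ((τ ^ (j + 1)) ((τ * chainC1 c) u)) = cyclen ((τ ^ j) ((τ * chainC1 c) u)) ↔
      cyclen ((τ ^ (j + 1)) ((τ * chainC1 c) v)) = cyclen ((τ ^ j) ((τ * chainC1 c) v))) :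
    cyclen (τ ((τ * chainC1 c) u)) = cyclen ((τ * chainC1 c) u) ↔
      cyclen (τ ((τ * chainC1 c) v)) = cyclen ((τ * chainC1 c) v) := by
  rw [← cyclen_tau_pow_succ_eq_iff hu j, H, cyclen_tau_pow_succ_eq_iff hv j]

/-- Corollary 4.5 (iii):  here `k = ‖u‖ + 1` and `ψ = τψ₂ = chainC1 ((0,1) :: c₂)`. -/
theorem stmt11 (u v : F) (huv : cyclen v ≤ cyclen u)
    (c₂ : List (ℕ × ℕ)) (hne : c₂ ≠ []) (hσ : cyclen u + 2 ≤ sigmaCount c₂)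
    (H : ∀ c' : List (ℕ × ℕ), c' ≠ [] → chainLen c' ≤ 1 + chainLen c₂ →
      ((cyclen ((σ ^ (cyclen u + 2)) (chainC1 c' u)) = cyclen ((σ ^ (cyclen u + 1)) (chainC1 c' u)) ↔
        cyclen ((σ ^ (cyclen u + 2)) (chainC1 c' v)) = cyclen ((σ ^ (cyclen u + 1)) (chainC1 c' v))) ∧
       (cyclen ((τ ^ (cyclen u + 2)) (chainC1 c' u)) = cyclen ((τ ^ (cyclen u + 1)) (chainC1 c' u)) ↔
        cyclen ((τ ^ (cyclen u + 2)) (chainC1 c' v)) = cyclen ((τ ^ (cyclen u + 1)) (chainC1 c' v))))) :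
    cyclen (τ ((τ * chainC1 c₂) u)) = cyclen ((τ * chainC1 c₂) u) ↔
      cyclen (τ ((τ * chainC1 c₂) v)) = cyclen ((τ * chainC1 c₂) v) := by
  refine stmt11_general u v c₂ (by omega) (by omega) (cyclen u + 1) ?_
  have hlen : chainLen ((0, 1) :: c₂) ≤ 1 + chainLen c₂ := by
    simp [chainLen, sigmaCount, tauCount]; omega
  simpa [chainC1] using (H ((0, 1) :: c₂) (List.cons_ne_nil _ _) hlen).2
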